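/- Let P be a normal logic program over its finite set of atoms a_1, …, a_n, let ⊗ be a t-norm and ⊕ a t-conorm, and let S ⊆ {a_1, …, a_n} be a stable model of P. Then there exist finitely many binary decision vectors δ^1, …, δ^m ∈ {0,1}^n such that the NDProp run defined by τ^0 = 𝒞_{P,0}^∞(0), φ^0 = 0, and for t ≥ 1: μ^{t-1} = (1−τ^{t-1}) ⊗ (1−φ^{t-1}) componentwise, φ^t = φ^{t-1} + (μ^{t-1} ⊙ δ^t), τ^t = 𝒞_{P,φ^t}^∞(τ^{t-1}), terminates with binary terminal degrees (τ^m_i, φ^m_i) ∈ {(1,0),(0,1)} for every i, binary membership score p with p_i = (τ^m_i + 1 − φ^m_i)/2 ∈ {0,1}, and [p] = S. -/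

import Mathlib

instance : Fact ((0:ℝ) ≤ 1) := ⟨zero_le_one⟩

/-- A rule of a normal logic program: head atom, positive body atoms, default-negated body atoms. -/
structure Rule (α : Type) where
  head : α
  pos : Finset α
  neg : Finset α
deriving DecidableEq

/-- A t-norm on the unit interval: commutative, associative, monotone in each argument,
with unit `1`. -/
structure Tnorm where
  f : unitInterval → unitInterval → unitInterval
  comm : ∀ x y, f x y = f y x
  assoc : ∀ x y z, f (f x y) z = f x (f y z)
  mono : ∀ ⦃x x' y y'⦄, x ≤ x' → y ≤ y' → f x y ≤ f x' y'
  one_left : ∀ x, f 1 x = x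

/-- A t-conorm on the unit interval: commutative, associative, monotone in each argument,
with unit `0`. -/
structure Tconorm where
  f : unitInterval → unitInterval → unitInterval
  comm : ∀ x y, f x y = f y x
  assoc : ∀ x y z, f (f x y) z = f x (f y z)
  mono : ∀ ⦃x x' y y'⦄, x ≤ x' → y ≤ y' → f x y ≤ f x' y'
  zero_left : ∀ x, f 0 x = x

instance (t : Tnorm) : Std.Commutative t.f := ⟨t.comm⟩
instance (t : Tnorm) : Std.Associative t.f := ⟨t.assoc⟩
instance (s : Tconorm) : Std.Commutative s.f := ⟨s.comm⟩
instance (s : Tconorm) : Std.Associative s.f := ⟨s.assoc⟩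

/-- ⊗-product of `g` over a finite set (empty product = `1`). -/
def tnormProd {β : Type} (t : Tnorm) (g : β → unitInterval) (s : Finset β) : unitInterval :=
  s.fold t.f 1 g

/-- ⊕-sum of `g` over a finite set (empty sum = `0`). -/
def tconormSum {β : Type} (s : Tconorm) (g : β → unitInterval) (q : Finset β) : unitInterval :=
  q.fold s.f 0 g

/-- Support `ρ(τ,φ)` of a rule: the ⊗-product of the values of all its body literals,
where `val(a) = τ a` and `val(not a) = φ a`. -/
def support {α : Type} (t : Tnorm) (τ φ : α → unitInterval) (r : Rule α) : unitInterval :=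
  t.f (tnormProd t τ r.pos) (tnormProd t φ r.neg)

/-- The soft immediate consequence operator `𝒞_{P,φ}(τ)`: for each atom `a`, the ⊕-sum of
the supports of all rules with head `a`. -/
def softC {α : Type} [DecidableEq α] (t : Tnorm) (s : Tconorm) (P : Finset (Rule α))
    (φ τ : α → unitInterval) : α → unitInterval :=
  fun a => tconormSum s (support t τ φ) (P.filter fun r => r.head = a)

/-- The set induced by a degree vector: `[ψ] = { a | ψ a = 1 }`. -/
def induced {α : Type} (ψ : α → unitInterval) : Set α := { a | ψ a = 1 }

/-- The undecided degree `μ = (1 − τ) ⊗ (1 − φ)` (componentwise). -/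
def undec {α : Type} (t : Tnorm) (τ φ : α → unitInterval) : α → unitInterval :=
  fun a => t.f (unitInterval.symm (τ a)) (unitInterval.symm (φ a))

/-- The Gelfond–Lifschitz reduct `P^S`. -/
def reduct {α : Type} (P : Finset (Rule α)) (S : Set α) : Set (Rule α) :=
  { r' | ∃ r ∈ P, (∀ b ∈ r.neg, b ∉ S) ∧ r' = ⟨r.head, r.pos, ∅⟩ }

/-- `M` is a model of the set of rules `Q`. -/
def isModel {α : Type} (Q : Set (Rule α)) (M : Set α) : Prop :=
  ∀ r ∈ Q, ↑r.pos ⊆ M → (∀ b ∈ r.neg, b ∉ M) → r.head ∈ M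

/-- `S` is a stable model of `P`: `S` is the least model of the reduct `P^S`. -/
def isStableModel {α : Type} (P : Finset (Rule α)) (S : Set α) : Prop :=
  isModel (reduct P S) S ∧ ∀ M : Set α, isModel (reduct P S) M → S ⊆ M

open Classical in
/-- Indicator vector of a set. -/
noncomputable def indVec {α : Type} (A : Set α) : α → unitInterval := fun a => if a ∈ A then 1 else 0

theorem Tnorm.zero_left' (t : Tnorm) (x : unitInterval) : t.f 0 x = 0 := by
  apply le_antisymm _ bot_le
  calc t.f 0 x ≤ t.f 0 1 := t.mono le_rfl le_top
    _ = 0 := by rw [t.comm, t.one_left]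

theorem Tconorm.one_left' (s : Tconorm) (x : unitInterval) : s.f 1 x = 1 := by
  apply le_antisymm le_top
  calc (1 : unitInterval) = s.f 1 0 := by rw [s.comm, s.zero_left]
    _ ≤ s.f 1 x := s.mono le_rfl bot_le

open Classical in
theorem tnormProd_ind {β : Type} (t : Tnorm) (A : Set β) (F : Finset β) :
    tnormProd t (indVec A) F = if (F : Set β) ⊆ A then 1 else 0 := by
  unfold tnormProd
  induction F using Finset.induction_on with
  | empty => simp
  | insert a F ha ih =>
    rw [Finset.fold_insert ha, ih]
    by_cases h : a ∈ A
    · simp [indVec, h, t.one_left, Set.insert_subset_iff]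
    · simp [indVec, h, t.zero_left', Set.insert_subset_iff]

open Classical in
theorem tconormSum_ind {β : Type} (s : Tconorm) (A : Set β) (F : Finset β) :
    tconormSum s (indVec A) F = if ∃ r ∈ F, r ∈ A then 1 else 0 := by
  unfold tconormSum
  induction F using Finset.induction_on with
  | empty => simp
  | insert a F ha ih =>
    rw [Finset.fold_insert ha, ih]
    by_cases h : a ∈ A
    · simp [indVec, h, s.one_left']
    · simp [indVec, h, s.zero_left]

/-- Boolean consequence operator. -/
def boolC {α : Type} (P : Finset (Rule α)) (N A : Set α) : Set α :=
  { a | ∃ r ∈ P, r.head = a ∧ (r.pos : Set α) ⊆ A ∧ (r.neg : Set α) ⊆ N }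

theorem boolC_mono {α : Type} (P : Finset (Rule α)) {N N' A A' : Set α} (hN : N ⊆ N')
    (hA : A ⊆ A') : boolC P N A ⊆ boolC P N' A' := by
  rintro a ⟨r, hr, h1, h2, h3⟩
  exact ⟨r, hr, h1, h2.trans hA, h3.trans hN⟩

theorem softC_ind {α : Type} [DecidableEq α] (t : Tnorm) (s : Tconorm) (P : Finset (Rule α))
    (N A : Set α) : softC t s P (indVec N) (indVec A) = indVec (boolC P N A) := by
  classical
  have h : support t (indVec A) (indVec N) =
      indVec { r : Rule α | (r.pos : Set α) ⊆ A ∧ (r.neg : Set α) ⊆ N } := by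
    funext r
    unfold support
    rw [tnormProd_ind, tnormProd_ind]
    by_cases h1 : (r.pos : Set α) ⊆ A
    · simp [indVec, h1, t.one_left]
    · simp [indVec, h1, t.zero_left']
  funext a
  unfold softC
  rw [h, tconormSum_ind]
  simp only [indVec, boolC, and_assoc, Finset.mem_filter, Set.mem_setOf_eq]

theorem softC_iter {α : Type} [DecidableEq α] (t : Tnorm) (s : Tconorm) (P : Finset (Rule α))
    (N A : Set α) (j : ℕ) :
    (softC t s P (indVec N))^[j] (indVec A) = indVec ((boolC P N)^[j] A) := by
  induction j with
  | zero => rfl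
  | succ j ih => rw [Function.iterate_succ_apply', Function.iterate_succ_apply', ih, softC_ind]

theorem boolC_limit {α : Type} [Fintype α] (P : Finset (Rule α)) (N A S : Set α)
    (hA : A ⊆ boolC P N A) (hAS : A ⊆ S) (hS : boolC P N S ⊆ S) :
    ∃ (L : Set α) (m : ℕ), (∀ j ≥ m, (boolC P N)^[j] A = L) ∧ boolC P N L = L ∧ L ⊆ S := by
  have hm : Monotone (boolC P N) := fun _ _ h => boolC_mono P le_rfl h
  have hmi := hm.monotone_iterate_of_le_map hA
  obtain ⟨n, hn⟩ := WellFoundedGT.monotone_chain_condition ⟨_, hmi⟩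
  refine ⟨(boolC P N)^[n] A, n, fun j hj => (hn j hj).symm, ?_, ?_⟩
  · rw [← Function.iterate_succ_apply' (boolC P N)]
    exact (hn (n+1) (Nat.le_succ n)).symm
  · have : ∀ j, (boolC P N)^[j] A ⊆ S := by
      intro j
      induction j with
      | zero => exact hAS
      | succ j ih =>
        rw [Function.iterate_succ_apply']
        exact (boolC_mono P le_rfl ih).trans hS
    exact this n

/-- Every stable model `S` of `P` is reached by some NDProp run with
finitely many binary decision vectors: `τ⁰ = 𝒞_{P,0}^∞(0)`, `φ⁰ = 0`, and for
`1 ≤ k ≤ m`: `φ^k = φ^{k-1} + (μ^{k-1} ⊙ δ^k)` with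
`μ^{k-1} = (1−τ^{k-1}) ⊗ (1−φ^{k-1})`, and `τ^k = 𝒞_{P,φ^k}^∞(τ^{k-1})`; the run
terminates with binary terminal degrees `(τ^m_i, φ^m_i) ∈ {(1,0),(0,1)}`, binary
membership score `p`, and `[p] = S`. -/
theorem stable_model_reached_by_binary_ndprop_run {α : Type} [Fintype α] [DecidableEq α]
    (t : Tnorm) (s : Tconorm) (P : Finset (Rule α)) (S : Set α)
    (hS : isStableModel P S) :
    ∃ (m : ℕ) (δ τs φs : ℕ → α → unitInterval),
      (∀ k a, δ k a = 0 ∨ δ k a = 1) ∧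
      (∃ m0 : ℕ, ∀ j ≥ m0, (softC t s P (fun _ => 0))^[j] (fun _ => 0) = τs 0) ∧
      φs 0 = (fun _ => (0 : unitInterval)) ∧
      (∀ k, 1 ≤ k → k ≤ m →
        (∀ a, (φs k a : ℝ) =
          (φs (k-1) a : ℝ) + (undec t (τs (k-1)) (φs (k-1)) a : ℝ) * (δ k a : ℝ)) ∧
        (∃ m1 : ℕ, ∀ j ≥ m1, (softC t s P (φs k))^[j] (τs (k-1)) = τs k)) ∧
      (∀ a, (τs m a = 1 ∧ φs m a = 0) ∨ (τs m a = 0 ∧ φs m a = 1)) ∧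
      (∀ a, ((τs m a : ℝ) + 1 - (φs m a : ℝ)) / 2 = 0 ∨
            ((τs m a : ℝ) + 1 - (φs m a : ℝ)) / 2 = 1) ∧
      { a | ((τs m a : ℝ) + 1 - (φs m a : ℝ)) / 2 = 1 } = S := by
  classical
  have hSm : boolC P Sᶜ S ⊆ S := by
    rintro a ⟨r, hr, rfl, h2, h3⟩
    exact hS.1 ⟨r.head, r.pos, ∅⟩ ⟨r, hr, fun b hb => h3 hb, rfl⟩ h2 (by simp)
  obtain ⟨T, m0, hT, hTf, hTS⟩ := boolC_limit P ∅ ∅ S (Set.empty_subset _) (Set.empty_subset _)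
    ((boolC_mono P (Set.empty_subset _) le_rfl).trans hSm)
  obtain ⟨L, m1, hL, hLf, hLS⟩ := boolC_limit P Sᶜ T S
    (hTf.symm.subset.trans (boolC_mono P (Set.empty_subset _) le_rfl)) hTS hSm
  have hSL : S ⊆ L := by
    apply hS.2
    rintro _ ⟨r, hr, h1, rfl⟩ h2 -
    rw [← hLf]
    exact ⟨r, hr, rfl, h2, fun b hb => h1 b hb⟩
  obtain rfl : L = S := hLS.antisymm hSL
  have h0 : (fun _ => 0 : α → unitInterval) = indVec ∅ := by funext a; simp [indVec]
  refine ⟨1, fun _ => indVec Lᶜ, fun k => if k = 0 then indVec T else indVec L,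
    fun k => if k = 0 then indVec ∅ else indVec Lᶜ, ?_, ?_, ?_, ?_, ?_, ?_, ?_⟩
  · intro k a
    by_cases h : a ∈ L <;> simp [indVec, h]
  · refine ⟨m0, fun j hj => ?_⟩
    rw [h0, softC_iter, hT j hj]
    simp
  · simp [h0]
  · intro k h1 h2
    obtain rfl : k = 1 := le_antisymm h2 h1
    refine ⟨fun a => ?_, m1, fun j hj => ?_⟩
    · by_cases h : a ∈ L
      · simp [indVec, h]
      · have h' : a ∉ T := fun h'' => h (hTS h'')
        simp [indVec, undec, h, h', t.one_left]
    · simp [softC_iter, hL j hj]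
  · intro a
    by_cases h : a ∈ L <;> simp [indVec, h]
  · intro a
    by_cases h : a ∈ L <;> simp [indVec, h]
  · ext a
    by_cases h : a ∈ L <;> simp [indVec, h]
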